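/- Let L > 0 and suppose (u1, u2, v1, v2) are smooth, L-periodic in x, and satisfy the four-component system: ∂ₜm1 + n2 g1 g2 + m1(f2 g2 + 2 f1 g1) = 0, ∂ₜm2 − n1 g1 g2 − m2(f1 g1 + 2 f2 g2) = 0, ∂ₜn1 − m2 f1 f2 − n1(f2 g2 + 2 f1 g1) = 0, ∂ₜn2 + m1 f1 f2 + n2(f1 g1 + 2 f2 g2) = 0. Then the quantity H₁(t) = ∫₀ᴸ (m2 f2 + n1 g1)(x, t) dx is independent of t. -/

import Mathlib

/-!
The density `h = m2 f2 + n1 g1` obeys a local conservation law `∂ₜ h = ∂ₓ F` with a flux `F` that is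
`L`-periodic in `x`; integrating over a period and over time gives the result
(`integral_eq_of_conservation`).

Put `a = ∂ₜu1`, `b = ∂ₜv2` and `S = f1 g1 + f2 g2`. The definitions give
`∂ₓf1 = n1 - g2`, `∂ₓf2 = g1 - n2`, `∂ₓg1 = f2 - m1`, `∂ₓg2 = m2 - f1`, hence
`∂ₓS = m2 f2 + n1 g1 - m1 f1 - n2 g2`. Since `1 - ∂ₓ²` is symmetric, the terms `m2 ∂ₜf2 + n1 ∂ₜg1`
equal `f1 ∂ₜm1 + g2 ∂ₜn2` up to the `x`-derivative of the bilinear expression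
`B = u2 aₓ - u2ₓ a + v1 bₓ - v1ₓ b + u2 b - u2ₓ bₓ + v1 a - v1ₓ aₓ`. Inserting the four equations
in `f2 ∂ₜm2 + g1 ∂ₜn1 + f1 ∂ₜm1 + g2 ∂ₜn2` yields `2 S ∂ₓS`, so `F = S² + B`.
-/

/-- Partial derivative with respect to the first (space) variable. -/
noncomputable def pX (f : ℝ × ℝ → ℝ) : ℝ × ℝ → ℝ :=
  fun p => deriv (fun x => f (x, p.2)) p.1

/-- Partial derivative with respect to the second (time) variable. -/
noncomputable def pT (f : ℝ × ℝ → ℝ) : ℝ × ℝ → ℝ :=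
  fun p => deriv (fun t => f (p.1, t)) p.2

theorem pX_eq_fderiv {f : ℝ × ℝ → ℝ} (hf : ContDiff ℝ (⊤ : ℕ∞) f) :
    pX f = fun p => fderiv ℝ f p (1, 0) := by
  funext p
  have h1 : HasFDerivAt f (fderiv ℝ f p) (p.1, p.2) :=
    (hf.differentiable (by simp) p).hasFDerivAt
  have h2 : HasDerivAt (fun x : ℝ => (x, p.2)) ((1 : ℝ), (0 : ℝ)) p.1 :=
    (hasDerivAt_id p.1).prodMk (hasDerivAt_const p.1 p.2)
  exact (h1.comp_hasDerivAt p.1 h2).deriv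

theorem pT_eq_fderiv {f : ℝ × ℝ → ℝ} (hf : ContDiff ℝ (⊤ : ℕ∞) f) :
    pT f = fun p => fderiv ℝ f p (0, 1) := by
  funext p
  have h1 : HasFDerivAt f (fderiv ℝ f p) (p.1, p.2) :=
    (hf.differentiable (by simp) p).hasFDerivAt
  have h2 : HasDerivAt (fun t : ℝ => (p.1, t)) ((0 : ℝ), (1 : ℝ)) p.2 :=
    (hasDerivAt_const p.2 p.1).prodMk (hasDerivAt_id p.2)
  exact (h1.comp_hasDerivAt p.2 h2).deriv

theorem contDiff_pX {f : ℝ × ℝ → ℝ} (hf : ContDiff ℝ (⊤ : ℕ∞) f) :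
    ContDiff ℝ (⊤ : ℕ∞) (pX f) := by
  rw [pX_eq_fderiv hf]
  exact (hf.fderiv_right (by simp)).clm_apply contDiff_const

theorem contDiff_pT {f : ℝ × ℝ → ℝ} (hf : ContDiff ℝ (⊤ : ℕ∞) f) :
    ContDiff ℝ (⊤ : ℕ∞) (pT f) := by
  rw [pT_eq_fderiv hf]
  exact (hf.fderiv_right (by simp)).clm_apply contDiff_const

theorem hasDerivAt_pX {f : ℝ × ℝ → ℝ} (hf : ContDiff ℝ (⊤ : ℕ∞) f) (x t : ℝ) :
    HasDerivAt (fun y => f (y, t)) (pX f (x, t)) x := by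
  have h : ContDiff ℝ (⊤ : ℕ∞) (fun y : ℝ => f (y, t)) := by fun_prop
  exact (h.differentiable (by simp) x).hasDerivAt

theorem hasDerivAt_pT {f : ℝ × ℝ → ℝ} (hf : ContDiff ℝ (⊤ : ℕ∞) f) (x t : ℝ) :
    HasDerivAt (fun s => f (x, s)) (pT f (x, t)) t := by
  have h : ContDiff ℝ (⊤ : ℕ∞) (fun s : ℝ => f (x, s)) := by fun_prop
  exact (h.differentiable (by simp) t).hasDerivAt

theorem pT_pX_comm {f : ℝ × ℝ → ℝ} (hf : ContDiff ℝ (⊤ : ℕ∞) f) :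
    pT (pX f) = pX (pT f) := by
  rw [pT_eq_fderiv (contDiff_pX hf), pX_eq_fderiv (contDiff_pT hf), pX_eq_fderiv hf,
    pT_eq_fderiv hf]
  funext p
  have hd : DifferentiableAt ℝ (fderiv ℝ f) p :=
    (hf.fderiv_right (m := (⊤ : ℕ∞)) (by simp)).differentiable (by simp) p
  have hs : IsSymmSndFDerivAt ℝ f p := by
    apply hf.contDiffAt.isSymmSndFDerivAt
    rw [minSmoothness_of_isRCLikeNormedField]
    exact WithTop.coe_le_coe.2 (le_top : (2 : ℕ∞) ≤ ⊤)
  have key : ∀ v w : ℝ × ℝ,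
      fderiv ℝ (fun q => fderiv ℝ f q v) p w = fderiv ℝ (fderiv ℝ f) p w v := by
    intro v w
    rw [(hd.hasFDerivAt.clm_apply (hasFDerivAt_const v p)).fderiv]
    simp
  simp only [key]
  exact hs.eq _ _

theorem pX_periodic {L : ℝ} {f : ℝ × ℝ → ℝ} (h : ∀ x t : ℝ, f (x + L, t) = f (x, t)) :
    ∀ x t : ℝ, pX f (x + L, t) = pX f (x, t) := by
  intro x t
  have h' := deriv_comp_add_const (fun y => f (y, t)) L x
  simp only [h] at h'
  exact h'.symm

theorem pT_periodic {L : ℝ} {f : ℝ × ℝ → ℝ} (h : ∀ x t : ℝ, f (x + L, t) = f (x, t)) :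
    ∀ x t : ℝ, pT f (x + L, t) = pT f (x, t) := by
  intro x t
  simp only [pT, h]

/-- A density whose time derivative is the `x`-derivative of a flux taking equal values at the two
ends of the interval has a time-independent integral: exchange the order of the `x`- and
`t`-integrations of the common derivative. -/
theorem integral_eq_of_conservation {L : ℝ} {h F : ℝ × ℝ → ℝ}
    (hh : ContDiff ℝ (⊤ : ℕ∞) h) (hF : ContDiff ℝ (⊤ : ℕ∞) F)
    (hc : ∀ x t : ℝ, pT h (x, t) = pX F (x, t)) (hper : ∀ t : ℝ, F (L, t) = F (0, t))
    (t1 t2 : ℝ) :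
    (∫ x in (0:ℝ)..L, h (x, t1)) = ∫ x in (0:ℝ)..L, h (x, t2) := by
  have cX := (contDiff_pX hF).continuous
  have cT := (contDiff_pT hh).continuous
  have ch := hh.continuous
  have ht : ∀ x : ℝ, (∫ t in t1..t2, pX F (x, t)) = h (x, t2) - h (x, t1) := by
    intro x
    simp only [← hc]
    exact intervalIntegral.integral_eq_sub_of_hasDerivAt (fun t _ => hasDerivAt_pT hh x t)
      (Continuous.intervalIntegrable (by fun_prop) _ _)
  have hx : ∀ t : ℝ, (∫ x in (0:ℝ)..L, pX F (x, t)) = 0 := by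
    intro t
    rw [intervalIntegral.integral_eq_sub_of_hasDerivAt (fun x _ => hasDerivAt_pX hF x t)
      (Continuous.intervalIntegrable (by fun_prop) _ _), hper, sub_self]
  have hswap : (∫ x in (0:ℝ)..L, ∫ t in t1..t2, pX F (x, t))
      = ∫ t in t1..t2, ∫ x in (0:ℝ)..L, pX F (x, t) := by
    apply MeasureTheory.intervalIntegral_intervalIntegral_swap (F := fun x t => pX F (x, t))
    exact (cX.continuousOn.integrableOn_compact (isCompact_uIcc.prod isCompact_uIcc)).mono_set
      (Set.prod_mono Set.uIoc_subset_uIcc Set.uIoc_subset_uIcc)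
  simp only [ht, hx, intervalIntegral.integral_zero] at hswap
  rw [intervalIntegral.integral_sub (Continuous.intervalIntegrable (by fun_prop) _ _)
    (Continuous.intervalIntegrable (by fun_prop) _ _)] at hswap
  linarith

theorem stmt_15
    (L : ℝ) (hL : 0 < L)
    (u1 u2 v1 v2 : ℝ × ℝ → ℝ)
    (hu1 : ContDiff ℝ (⊤ : ℕ∞) u1) (hu2 : ContDiff ℝ (⊤ : ℕ∞) u2)
    (hv1 : ContDiff ℝ (⊤ : ℕ∞) v1) (hv2 : ContDiff ℝ (⊤ : ℕ∞) v2)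
    (hperu1 : ∀ x t : ℝ, u1 (x + L, t) = u1 (x, t))
    (hperu2 : ∀ x t : ℝ, u2 (x + L, t) = u2 (x, t))
    (hperv1 : ∀ x t : ℝ, v1 (x + L, t) = v1 (x, t))
    (hperv2 : ∀ x t : ℝ, v2 (x + L, t) = v2 (x, t))
    (m1 m2 n1 n2 f1 f2 g1 g2 : ℝ × ℝ → ℝ)
    (hm1 : m1 = fun p => u1 p - pX (pX u1) p)
    (hm2 : m2 = fun p => u2 p - pX (pX u2) p)
    (hn1 : n1 = fun p => v1 p - pX (pX v1) p)
    (hn2 : n2 = fun p => v2 p - pX (pX v2) p)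
    (hf1 : f1 = fun p => u2 p - pX v1 p)
    (hf2 : f2 = fun p => u1 p + pX v2 p)
    (hg1 : g1 = fun p => v2 p + pX u1 p)
    (hg2 : g2 = fun p => v1 p - pX u2 p)
    (hsys : ∀ p : ℝ × ℝ,
        pT m1 p + n2 p * g1 p * g2 p + m1 p * (f2 p * g2 p + 2 * f1 p * g1 p) = 0 ∧
        pT m2 p - n1 p * g1 p * g2 p - m2 p * (f1 p * g1 p + 2 * f2 p * g2 p) = 0 ∧
        pT n1 p - m2 p * f1 p * f2 p - n1 p * (f2 p * g2 p + 2 * f1 p * g1 p) = 0 ∧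
        pT n2 p + m1 p * f1 p * f2 p + n2 p * (f1 p * g1 p + 2 * f2 p * g2 p) = 0) :
    ∀ t1 t2 : ℝ,
      (∫ x in (0:ℝ)..L, (m2 (x, t1) * f2 (x, t1) + n1 (x, t1) * g1 (x, t1)))
        = ∫ x in (0:ℝ)..L, (m2 (x, t2) * f2 (x, t2) + n1 (x, t2) * g1 (x, t2)) := by
  have hu1x := contDiff_pX hu1
  have hu2x := contDiff_pX hu2
  have hv1x := contDiff_pX hv1
  have hv2x := contDiff_pX hv2
  have hu1xx := contDiff_pX hu1x
  have hu2xx := contDiff_pX hu2x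
  have hv1xx := contDiff_pX hv1x
  have hv2xx := contDiff_pX hv2x
  have ha := contDiff_pT hu1
  have hb := contDiff_pT hv2
  have hax := contDiff_pX ha
  have hbx := contDiff_pX hb
  have cm2 : ContDiff ℝ (⊤ : ℕ∞) m2 := by subst hm2; fun_prop
  have cn1 : ContDiff ℝ (⊤ : ℕ∞) n1 := by subst hn1; fun_prop
  have cf1 : ContDiff ℝ (⊤ : ℕ∞) f1 := by subst hf1; fun_prop
  have cf2 : ContDiff ℝ (⊤ : ℕ∞) f2 := by subst hf2; fun_prop
  have cg1 : ContDiff ℝ (⊤ : ℕ∞) g1 := by subst hg1; fun_prop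
  have cg2 : ContDiff ℝ (⊤ : ℕ∞) g2 := by subst hg2; fun_prop
  have ch : ContDiff ℝ (⊤ : ℕ∞) (fun p => m2 p * f2 p + n1 p * g1 p) := by fun_prop
  have cF : ContDiff ℝ (⊤ : ℕ∞) (fun p =>
      (f1 p * g1 p + f2 p * g2 p) * (f1 p * g1 p + f2 p * g2 p)
      + (u2 p * pX (pT u1) p - pX u2 p * pT u1 p)
      + (v1 p * pX (pT v2) p - pX v1 p * pT v2 p)
      + (u2 p * pT v2 p - pX u2 p * pX (pT v2) p)
      + (v1 p * pT u1 p - pX v1 p * pX (pT u1) p)) := by fun_prop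
  refine integral_eq_of_conservation (L := L) ch cF ?_ ?_
  · intro x t
    -- Time derivatives, with `∂ₜ` moved inside `∂ₓ`.
    have dm1 : pT m1 (x, t) = pT u1 (x, t) - pX (pX (pT u1)) (x, t) := by
      rw [← pT_pX_comm hu1, ← pT_pX_comm hu1x, hm1]
      exact ((hasDerivAt_pT hu1 x t).sub (hasDerivAt_pT hu1xx x t)).deriv
    have dn2 : pT n2 (x, t) = pT v2 (x, t) - pX (pX (pT v2)) (x, t) := by
      rw [← pT_pX_comm hv2, ← pT_pX_comm hv2x, hn2]
      exact ((hasDerivAt_pT hv2 x t).sub (hasDerivAt_pT hv2xx x t)).deriv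
    have df2 : pT f2 (x, t) = pT u1 (x, t) + pX (pT v2) (x, t) := by
      rw [← pT_pX_comm hv2, hf2]
      exact ((hasDerivAt_pT hu1 x t).add (hasDerivAt_pT hv2x x t)).deriv
    have dg1 : pT g1 (x, t) = pT v2 (x, t) + pX (pT u1) (x, t) := by
      rw [← pT_pX_comm hu1, hg1]
      exact ((hasDerivAt_pT hv2 x t).add (hasDerivAt_pT hu1x x t)).deriv
    have ef1 : pX f1 (x, t) = n1 (x, t) - g2 (x, t) := by
      have : pX f1 (x, t) = pX u2 (x, t) - pX (pX v1) (x, t) := by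
        rw [hf1]
        exact ((hasDerivAt_pX hu2 x t).sub (hasDerivAt_pX hv1x x t)).deriv
      rw [this, hn1, hg2]; ring
    have ef2 : pX f2 (x, t) = g1 (x, t) - n2 (x, t) := by
      have : pX f2 (x, t) = pX u1 (x, t) + pX (pX v2) (x, t) := by
        rw [hf2]
        exact ((hasDerivAt_pX hu1 x t).add (hasDerivAt_pX hv2x x t)).deriv
      rw [this, hn2, hg1]; ring
    have eg1 : pX g1 (x, t) = f2 (x, t) - m1 (x, t) := by
      have : pX g1 (x, t) = pX v2 (x, t) + pX (pX u1) (x, t) := by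
        rw [hg1]
        exact ((hasDerivAt_pX hv2 x t).add (hasDerivAt_pX hu1x x t)).deriv
      rw [this, hm1, hf2]; ring
    have eg2 : pX g2 (x, t) = m2 (x, t) - f1 (x, t) := by
      have : pX g2 (x, t) = pX v1 (x, t) - pX (pX u2) (x, t) := by
        rw [hg2]
        exact ((hasDerivAt_pX hv1 x t).sub (hasDerivAt_pX hu2x x t)).deriv
      rw [this, hm2, hf1]; ring
    have dh := (((hasDerivAt_pT cm2 x t).mul (hasDerivAt_pT cf2 x t)).add
      ((hasDerivAt_pT cn1 x t).mul (hasDerivAt_pT cg1 x t))).deriv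
    have dS := ((hasDerivAt_pX cf1 x t).mul (hasDerivAt_pX cg1 x t)).add
      ((hasDerivAt_pX cf2 x t).mul (hasDerivAt_pX cg2 x t))
    have dF := (((((dS.mul dS).add
      (((hasDerivAt_pX hu2 x t).mul (hasDerivAt_pX hax x t)).sub
        ((hasDerivAt_pX hu2x x t).mul (hasDerivAt_pX ha x t)))).add
      (((hasDerivAt_pX hv1 x t).mul (hasDerivAt_pX hbx x t)).sub
        ((hasDerivAt_pX hv1x x t).mul (hasDerivAt_pX hb x t)))).add
      (((hasDerivAt_pX hu2 x t).mul (hasDerivAt_pX hb x t)).sub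
        ((hasDerivAt_pX hu2x x t).mul (hasDerivAt_pX hbx x t)))).add
      (((hasDerivAt_pX hv1 x t).mul (hasDerivAt_pX ha x t)).sub
        ((hasDerivAt_pX hv1x x t).mul (hasDerivAt_pX hax x t)))).deriv
    refine Eq.trans dh (Eq.trans ?_ dF.symm)
    obtain ⟨s1, s2, s3, s4⟩ := hsys (x, t)
    have xm2 : pX (pX u2) (x, t) = u2 (x, t) - m2 (x, t) := by rw [hm2]; ring
    have xn1 : pX (pX v1) (x, t) = v1 (x, t) - n1 (x, t) := by rw [hn1]; ring
    have xf1 : pX v1 (x, t) = u2 (x, t) - f1 (x, t) := by rw [hf1]; ring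
    have xg2 : pX u2 (x, t) = v1 (x, t) - g2 (x, t) := by rw [hg2]; ring
    have xa : pX (pX (pT u1)) (x, t) = pT u1 (x, t) - pT m1 (x, t) := by rw [dm1]; ring
    have xb : pX (pX (pT v2)) (x, t) = pT v2 (x, t) - pT n2 (x, t) := by rw [dn2]; ring
    simp only [Pi.mul_apply, Pi.add_apply, df2, dg1, ef1, ef2, eg1, eg2, xm2, xn1, xa, xb, xf1, xg2]
    -- Each equation of the system is weighted by the factor it meets in
    -- `f2 ∂ₜm2 + g1 ∂ₜn1 + f1 ∂ₜm1 + g2 ∂ₜn2`.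
    linear_combination f1 (x, t) * s1 + f2 (x, t) * s2 + g1 (x, t) * s3 + g2 (x, t) * s4
  · intro t
    have per0 : ∀ {f : ℝ × ℝ → ℝ}, (∀ x t : ℝ, f (x + L, t) = f (x, t)) → f (L, t) = f (0, t) :=
      fun {f} h => by simpa using h 0 t
    simp only [hf1, hf2, hg1, hg2, per0 hperu1, per0 hperu2, per0 hperv1, per0 hperv2,
      per0 (pX_periodic hperu1), per0 (pX_periodic hperu2), per0 (pX_periodic hperv1),
      per0 (pX_periodic hperv2), per0 (pT_periodic hperu1), per0 (pT_periodic hperv2),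
      per0 (pX_periodic (pT_periodic hperu1)), per0 (pX_periodic (pT_periodic hperv2))]
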